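/- Let e ∈ ℝ³ be a unit vector, δ ∈ (0,1), and f : ℝ³ → ℝ smooth compactly supported with support in the ball B(0,δ). Then lim_{r→∞} ∫_{ℝ³} f(x) · r² [ ∫₀^∞ j₀(r(e+x) − se) ds ] dx = q ∫_ℝ f(σe) dσ. -/

import Mathlib

open MeasureTheory Filter Topology Real Set Metric
open scoped InnerProductSpace

noncomputable section

local notation "ℝ³" => EuclideanSpace ℝ (Fin 3)

/-!
Write `A g x = ∫₀^∞ g (x - s e) ds`. Its transpose is integration along the opposite ray, so that
rescaling `x` and `s` by `r` and transposing gives, for every `r > 0`,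
`∫ f(x) rᵈ⁻¹ (A j)(r(e + x)) dx = ∫ F(y/r - e) j(y) dy`, where `F z = ∫₀^∞ f (z + s e) ds`.
The function `F` is bounded and continuous, so by dominated convergence the right-hand side tends to
`F(-e) ∫ j`, and `F(-e)` is the integral of `f(σe)` over `σ > -1`. If `f` is supported in the ball
of radius `‖e‖`, this is the integral over the whole axis.
-/

variable {E F G : Type*} [NormedAddCommGroup E] [NormedSpace ℝ E]
  [NormedAddCommGroup F] [NormedAddCommGroup G] [NormedSpace ℝ G] {e : E}

theorem continuous_integral_comp_add_smul (ν : Measure ℝ) [IsFiniteMeasureOnCompacts ν]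
    {f : E → G} (he : e ≠ 0) (hf : Continuous f) (hfc : HasCompactSupport f) :
    Continuous fun x => ∫ t, f (x + t • e) ∂ν := by
  obtain ⟨R, hR⟩ := hfc.isBounded.exists_norm_le
  refine continuous_iff_continuousAt.2 fun a => ?_
  have eq_zero_off_compact : ∀ x t, x ∈ closedBall a 1 →
      t ∉ closedBall (0 : ℝ) ((R + (‖a‖ + 1)) / ‖e‖) → f (x + t • e) = 0 := by
    intro x t hx ht
    contrapose! ht
    rw [mem_closedBall_zero_iff, le_div_iff₀ (norm_pos_iff.2 he), ← norm_smul]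
    calc ‖t • e‖ = ‖(x + t • e) - x‖ := by rw [add_sub_cancel_left]
      _ ≤ ‖x + t • e‖ + ‖x‖ := norm_sub_le _ _
      _ ≤ R + (‖a‖ + 1) :=
        add_le_add (hR _ (subset_tsupport f ht)) (norm_le_of_mem_closedBall hx)
  exact (continuousOn_integral_of_compact_support (isCompact_closedBall _ _) (by fun_prop)
    eq_zero_off_compact).continuousAt (closedBall_mem_nhds a one_pos)

theorem integrable_comp_add_smul (ν : Measure ℝ) [IsFiniteMeasureOnCompacts ν]
    {f : E → F} (he : e ≠ 0) (hf : Continuous f) (hfc : HasCompactSupport f) (x : E) :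
    Integrable (fun t => f (x + t • e)) ν :=
  Continuous.integrable_of_hasCompactSupport (by fun_prop) <| hfc.comp_isClosedEmbedding <|
    (Homeomorph.addLeft x).isClosedEmbedding.comp (isClosedEmbedding_smul_left he)

theorem exists_integral_norm_comp_add_smul_le
    {f : E → F} (he : e ≠ 0) (hf : Continuous f) (hfc : HasCompactSupport f) :
    ∃ C, ∀ x, ∫ t : ℝ, ‖f (x + t • e)‖ ≤ C := by
  have hcont : Continuous fun x => ∫ t : ℝ, ‖f (x + t • e)‖ :=
    continuous_integral_comp_add_smul volume he hf.norm hfc.norm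
  obtain ⟨C, hC⟩ := hfc.isCompact.exists_bound_of_continuousOn hcont.continuousOn
  refine ⟨max C 0, fun x => ?_⟩
  by_cases hx : ∃ t₀ : ℝ, f (x + t₀ • e) ≠ 0
  · -- The integral does not change when `x` moves along `e`, so `x` may be moved into the support.
    obtain ⟨t₀, ht₀⟩ := hx
    calc ∫ t : ℝ, ‖f (x + t • e)‖ = ∫ t : ℝ, ‖f (x + (t + t₀) • e)‖ :=
          (integral_add_right_eq_self (fun t : ℝ => ‖f (x + t • e)‖) t₀).symm
      _ = ∫ t : ℝ, ‖f (x + t₀ • e + t • e)‖ := by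
          simp only [add_smul, add_assoc, add_comm (t₀ • e)]
      _ ≤ C := (le_norm_self _).trans (hC _ (subset_tsupport f ht₀))
      _ ≤ max C 0 := le_max_left C 0
  · push Not at hx
    simp [hx]

/-- The operator `(e·∇ + 0)⁻¹`: the integral of `g` over the ray issuing from `x` in the direction
`-e`, with the value `0` if `g` is not integrable along that ray. For `e` a unit vector, `e` times
`rayIntegral e j₀` is the axial-gauge flux `(e/(e·∇+0)) j₀`. -/
def rayIntegral (e : E) (g : E → G) (x : E) : G :=
  ∫ s in Ioi (0 : ℝ), g (x - s • e)

theorem rayIntegral_eq_integral_add (e : E) (g : E → G) :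
    rayIntegral e g = fun x => ∫ s in Ioi (0 : ℝ), g (x + s • -e) := by
  ext x
  simp only [rayIntegral, smul_neg, sub_eq_add_neg]

theorem rayIntegral_neg (e : E) (g : E → G) (x : E) :
    rayIntegral (-e) g x = ∫ s in Ioi (0 : ℝ), g (x + s • e) := by
  simp only [rayIntegral, smul_neg, sub_neg_eq_add]

theorem rayIntegral_neg_apply_neg (e : E) (g : E → G) :
    rayIntegral (-e) g (-e) = ∫ σ in Ioi (-1 : ℝ), g (σ • e) := by
  have hshift := (measurePreserving_add_left (volume : Measure ℝ) (-1)).setIntegral_preimage_emb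
    (measurableEmbedding_addLeft (-1)) (fun σ => g (σ • e)) (Ioi (-1))
  rw [rayIntegral_neg]
  simpa [add_smul] using hshift

theorem rayIntegral_smul_add (g : E → G) (x : E) {r : ℝ} (hr : 0 < r) :
    rayIntegral e g (r • (e + x)) = r • rayIntegral e (fun z => g (r • (e + z))) x := by
  have hscale := integral_comp_mul_left_Ioi' (fun s : ℝ => g (r • (e + x) - s • e)) 0 hr
  rw [mul_zero] at hscale
  rw [rayIntegral, rayIntegral, ← hscale]
  congr! 4
  module

theorem continuous_rayIntegral {f : E → G} (he : e ≠ 0) (hf : Continuous f)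
    (hfc : HasCompactSupport f) : Continuous (rayIntegral e f) := by
  rw [rayIntegral_eq_integral_add]
  exact continuous_integral_comp_add_smul _ (neg_ne_zero.2 he) hf hfc

theorem exists_norm_rayIntegral_le {f : E → G} (he : e ≠ 0) (hf : Continuous f)
    (hfc : HasCompactSupport f) : ∃ C, ∀ x, ‖rayIntegral e f x‖ ≤ C := by
  obtain ⟨C, hC⟩ := exists_integral_norm_comp_add_smul_le (neg_ne_zero.2 he) hf hfc
  refine ⟨C, fun x => ?_⟩
  calc ‖rayIntegral e f x‖ = ‖∫ s in Ioi (0 : ℝ), f (x + s • -e)‖ := by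
        rw [rayIntegral_eq_integral_add]
    _ ≤ ∫ s in Ioi (0 : ℝ), ‖f (x + s • -e)‖ := norm_integral_le_integral_norm _
    _ ≤ ∫ s : ℝ, ‖f (x + s • -e)‖ := setIntegral_le_integral
        (integrable_comp_add_smul volume (neg_ne_zero.2 he) hf hfc x).norm
        (.of_forall fun _ => norm_nonneg _)
    _ ≤ C := hC x

theorem setIntegral_Ioi_neg_one_comp_smul {f : E → G}
    (hf : Function.support f ⊆ ball 0 ‖e‖) :
    ∫ σ in Ioi (-1 : ℝ), f (σ • e) = ∫ σ : ℝ, f (σ • e) := by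
  refine setIntegral_eq_integral_of_forall_compl_eq_zero fun σ hσ => ?_
  by_contra hne
  have hlt : |σ| * ‖e‖ < ‖e‖ := by
    simpa [norm_smul] using hf (Function.mem_support.2 hne)
  have hle : 1 ≤ |σ| := le_abs.2 (.inr (le_neg_of_le_neg (not_lt.1 hσ)))
  exact hlt.not_ge (le_mul_of_one_le_left (norm_nonneg e) hle)

variable [MeasurableSpace E] [BorelSpace E]

theorem tendsto_integral_comp_inv_smul_sub_smul {μ : Measure E} {φ : E → ℝ} {j : E → G} {C : ℝ}
    (hφ : Continuous φ) (hφC : ∀ x, ‖φ x‖ ≤ C) (hj : Integrable j μ) (a : E) :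
    Tendsto (fun r : ℝ => ∫ y, φ (r⁻¹ • y - a) • j y ∂μ) atTop
      (𝓝 (φ (-a) • ∫ y, j y ∂μ)) := by
  rw [← integral_smul]
  refine tendsto_integral_filter_of_dominated_convergence (fun y => C * ‖j y‖)
    (.of_forall fun r => ?_) (.of_forall fun r => .of_forall fun y => ?_)
    (hj.norm.const_mul C) (.of_forall fun y => ?_)
  · exact (by fun_prop : Continuous fun y => φ (r⁻¹ • y - a)).aestronglyMeasurable.smul
      hj.aestronglyMeasurable
  · rw [norm_smul]
    gcongr
    exact hφC _
  · refine ((hφ.tendsto _).comp ?_).smul_const (j y)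
    simpa using ((tendsto_inv_atTop_zero (𝕜 := ℝ)).smul_const y).sub_const a

variable [FiniteDimensional ℝ E] (μ : Measure E) [μ.IsAddHaarMeasure] {f : E → ℝ} {j : E → G}

theorem measurePreserving_sub_fst_smul (ν : Measure ℝ) [SFinite ν] (e : E) :
    MeasurePreserving (fun p : ℝ × E => (p.1, p.2 - p.1 • e)) (ν.prod μ) (ν.prod μ) :=
  (MeasurePreserving.id ν).skew_product (by fun_prop)
    (.of_forall fun s => (measurePreserving_sub_right μ (s • e)).map_eq)

variable {μ}

theorem integrable_comp_add_smul_smul (he : e ≠ 0) (hf : Continuous f) (hfc : HasCompactSupport f)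
    (hj : Integrable j μ) :
    Integrable (fun p : ℝ × E => f (p.2 + p.1 • e) • j p.2) ((volume : Measure ℝ).prod μ) := by
  obtain ⟨C, hC⟩ := exists_integral_norm_comp_add_smul_le he hf hfc
  have hmeas : AEStronglyMeasurable (fun p : ℝ × E => f (p.2 + p.1 • e) • j p.2)
      ((volume : Measure ℝ).prod μ) :=
    (by fun_prop : Continuous fun p : ℝ × E => f (p.2 + p.1 • e)).aestronglyMeasurable.smul
      hj.aestronglyMeasurable.comp_snd
  refine (integrable_prod_iff' hmeas).2 ⟨.of_forall fun y =>
    (integrable_comp_add_smul volume he hf hfc y).smul_const (j y), ?_⟩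
  simp only [norm_smul, integral_mul_const]
  refine hj.norm.bdd_mul (c := C) (continuous_integral_comp_add_smul volume he hf.norm
    hfc.norm).aestronglyMeasurable (.of_forall fun y => ?_)
  rw [Real.norm_of_nonneg (integral_nonneg fun _ => norm_nonneg _)]
  exact hC y

theorem integral_smul_rayIntegral [CompleteSpace G] (he : e ≠ 0) (hf : Continuous f)
    (hfc : HasCompactSupport f) (hj : Integrable j μ) :
    ∫ x, f x • rayIntegral e j x ∂μ = ∫ x, rayIntegral (-e) f x • j x ∂μ := by
  have hint : Integrable (fun p : ℝ × E => f (p.2 + p.1 • e) • j p.2)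
      ((volume.restrict (Ioi 0)).prod μ) :=
    (integrable_comp_add_smul_smul he hf hfc hj).mono_measure
      (Measure.prod_mono Measure.restrict_le_self le_rfl)
  have hint_shear : Integrable (fun p : ℝ × E => f p.2 • j (p.2 - p.1 • e))
      ((volume.restrict (Ioi 0)).prod μ) := by
    simpa only [Function.comp_def, sub_add_cancel] using
      (measurePreserving_sub_fst_smul μ _ e).integrable_comp_of_integrable hint
  calc ∫ x, f x • rayIntegral e j x ∂μ
      = ∫ x, (∫ s in Ioi (0 : ℝ), f x • j (x - s • e)) ∂μ := by
        simp only [rayIntegral, integral_smul]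
    _ = ∫ s in Ioi (0 : ℝ), ∫ x, f x • j (x - s • e) ∂μ :=
        (integral_integral_swap hint_shear).symm
    _ = ∫ s in Ioi (0 : ℝ), ∫ x, f (x + s • e) • j x ∂μ := by
        congr! 2 with s
        simpa only [add_sub_cancel_right] using
          (integral_add_right_eq_self (fun x => f x • j (x - s • e)) (s • e)).symm
    _ = ∫ x, (∫ s in Ioi (0 : ℝ), f (x + s • e) • j x) ∂μ := integral_integral_swap hint
    _ = ∫ x, rayIntegral (-e) f x • j x ∂μ := by
        simp only [rayIntegral_neg, integral_smul_const]

theorem pow_finrank_smul_integral_smul_comp (φ : E → ℝ) (j : E → G) (a : E) {r : ℝ} (hr : 0 < r) :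
    r ^ Module.finrank ℝ E • ∫ x, φ x • j (r • (a + x)) ∂μ =
      ∫ y, φ (r⁻¹ • y - a) • j y ∂μ := by
  calc r ^ Module.finrank ℝ E • ∫ x, φ x • j (r • (a + x)) ∂μ
      = r ^ Module.finrank ℝ E • ∫ x, φ (x - a) • j (r • x) ∂μ := by
        rw [← integral_add_left_eq_self (fun x => φ (x - a) • j (r • x)) a]
        simp only [add_sub_cancel_left]
    _ = ∫ y, φ (r⁻¹ • y - a) • j (r • r⁻¹ • y) ∂μ :=
        (Measure.integral_comp_inv_smul_of_nonneg μ (fun x => φ (x - a) • j (r • x)) hr.le).symm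
    _ = ∫ y, φ (r⁻¹ • y - a) • j y ∂μ := by simp only [smul_inv_smul₀ hr.ne']

theorem integral_smul_pow_smul_rayIntegral [CompleteSpace G] (he : e ≠ 0)
    (hf : Continuous f) (hfc : HasCompactSupport f) (hj : Integrable j μ) {r : ℝ} (hr : 0 < r) :
    ∫ x, f x • r ^ (Module.finrank ℝ E - 1) • rayIntegral e j (r • (e + x)) ∂μ =
      ∫ y, rayIntegral (-e) f (r⁻¹ • y - e) • j y ∂μ := by
  have hpos : 0 < Module.finrank ℝ E := Module.finrank_pos_iff_exists_ne_zero.2 ⟨e, he⟩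
  have hjr : Integrable (fun z => j (r • (e + z))) μ := (hj.comp_smul hr.ne').comp_add_left e
  calc ∫ x, f x • r ^ (Module.finrank ℝ E - 1) • rayIntegral e j (r • (e + x)) ∂μ
      = r ^ Module.finrank ℝ E • ∫ x, f x • rayIntegral e (fun z => j (r • (e + z))) x ∂μ := by
        rw [← integral_smul]
        congr! 2 with x
        rw [rayIntegral_smul_add j x hr, smul_smul _ r, pow_sub_one_mul hpos.ne', smul_comm]
    _ = r ^ Module.finrank ℝ E • ∫ x, rayIntegral (-e) f x • j (r • (e + x)) ∂μ := by
        rw [integral_smul_rayIntegral he hf hfc hjr]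
    _ = ∫ y, rayIntegral (-e) f (r⁻¹ • y - e) • j y ∂μ :=
        pow_finrank_smul_integral_smul_comp _ j e hr

theorem stmt_7_general [CompleteSpace G] (he : e ≠ 0) (hf : Continuous f)
    (hfc : HasCompactSupport f) (hj : Integrable j μ) :
    Tendsto
      (fun r : ℝ => ∫ x, f x • r ^ (Module.finrank ℝ E - 1) • rayIntegral e j (r • (e + x)) ∂μ)
      atTop (𝓝 ((∫ σ in Ioi (-1 : ℝ), f (σ • e)) • ∫ y, j y ∂μ)) := by
  obtain ⟨C, hC⟩ := exists_norm_rayIntegral_le (neg_ne_zero.2 he) hf hfc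
  rw [← rayIntegral_neg_apply_neg]
  refine (tendsto_integral_comp_inv_smul_sub_smul
    (continuous_rayIntegral (neg_ne_zero.2 he) hf hfc) hC hj e).congr' ?_
  filter_upwards [eventually_gt_atTop 0] with r hr
  exact (integral_smul_pow_smul_rayIntegral he hf hfc hj hr).symm

/-- The axial-gauge flux in the direction of the gauge axis:
`lim_{r→∞} ∫ f(x) r² ∫₀^∞ j₀(r(e+x) − se) ds dx = q ∫ f(σe) dσ`. -/
theorem stmt_7 (j₀ : ℝ³ → ℝ) (hj : ContDiff ℝ (⊤ : ℕ∞) j₀) (hjc : HasCompactSupport j₀)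
    (e : ℝ³) (he : ‖e‖ = 1) (δ : ℝ) (hδ : δ ∈ Ioo (0 : ℝ) 1)
    (f : ℝ³ → ℝ) (hf : ContDiff ℝ (⊤ : ℕ∞) f) (hfc : HasCompactSupport f)
    (hsupp : Function.support f ⊆ Metric.ball (0 : ℝ³) δ) :
    Tendsto (fun r : ℝ => ∫ x : ℝ³,
        f x * (r ^ 2 * ∫ s in Ioi (0 : ℝ), j₀ (r • (e + x) - s • e)))
      atTop (𝓝 ((∫ x : ℝ³, j₀ x) * ∫ σ : ℝ, f (σ • e))) := by
  have he₀ : e ≠ 0 := norm_ne_zero_iff.1 (he ▸ one_ne_zero)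
  have hlim := stmt_7_general (μ := volume) he₀ hf.continuous hfc
    (hj.continuous.integrable_of_hasCompactSupport hjc)
  rw [setIntegral_Ioi_neg_one_comp_smul (hsupp.trans (ball_subset_ball (he ▸ hδ.2.le))),
    finrank_euclideanSpace_fin] at hlim
  rwa [mul_comm]
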